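/- Let γ₁ and γ₂ be two simple curves in ℝ² each having endpoints a and b with a ≠ b, such that γ₁ ∩ γ₂ = {a, b}. Then γ₁ ∪ γ₂ is a Jordan curve, i.e. it is the boundary of a bounded connected open domain. -/

import Mathlib

open Set

noncomputable section

abbrev E2 := EuclideanSpace ℝ (Fin 2)

/-
The proof is Eilenberg's, by continuous logarithms, for two arcs from `a` to `b` in `ℂ`. Off a
single arc the function `(z - a) / (z - b)` has a continuous logarithm: slide the zero `a` along
the arc to the pole `b`. If the complement of the union `J` of the arcs were connected, the two
logarithms could be glued to one on the complement of `{a, b}`, which winding around `a` excludes.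
So the complement of `J` has a bounded component, with frontier `F ⊆ J`. If `F` missed a point of
`J`, then `z - p` would have a logarithm on `F` for each `p` in the component, because cutting the
closed curve leaves nothing to wind around. Extending that logarithm over the component would give
a nowhere vanishing function on `ℂ` equal to `z - p` on a large circle, which winding around `p`
again excludes.
-/

open Topology unitInterval

section HasLogOn

variable {X : Type*} [TopologicalSpace X] {q q' : X → ℂ} {A B S : Set X}

/-- `q` has a continuous logarithm on `S`, so that in particular `q` is continuous and nonvanishing
there. The logarithm is a function on the whole space, with arbitrary values off `S`. -/
def HasLogOn (q : X → ℂ) (S : Set X) : Prop :=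
  ∃ l : X → ℂ, ContinuousOn l S ∧ ∀ x ∈ S, Complex.exp (l x) = q x

theorem HasLogOn.mono (hB : HasLogOn q B) (hAB : A ⊆ B) : HasLogOn q A :=
  let ⟨l, hl, hexp⟩ := hB
  ⟨l, hl.mono hAB, fun x hx => hexp x (hAB hx)⟩

theorem HasLogOn.congr (hq : HasLogOn q S) (h : EqOn q' q S) : HasLogOn q' S :=
  let ⟨l, hl, hexp⟩ := hq
  ⟨l, hl, fun x hx => (hexp x hx).trans (h hx).symm⟩

theorem HasLogOn.mul (hq : HasLogOn q S) (hq' : HasLogOn q' S) : HasLogOn (q * q') S :=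
  let ⟨l, hl, hexp⟩ := hq
  let ⟨l', hl', hexp'⟩ := hq'
  ⟨l + l', hl.add hl', fun x hx => by
    rw [Pi.add_apply, Complex.exp_add, hexp x hx, hexp' x hx, Pi.mul_apply]⟩

theorem hasLogOn_const {c : ℂ} (hc : c ≠ 0) (S : Set X) : HasLogOn (fun _ => c) S :=
  ⟨fun _ => Complex.log c, continuousOn_const, fun _ _ => Complex.exp_log hc⟩

theorem hasLogOn_iff_domRestrict : HasLogOn q S ↔ HasLogOn (S.domRestrict q) univ := by
  constructor
  · rintro ⟨l, hl, hexp⟩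
    exact ⟨S.domRestrict l, hl.domRestrict.continuousOn, fun x _ => hexp x x.2⟩
  · rintro ⟨l, hl, hexp⟩
    have hext (x : S) : Function.extend Subtype.val l 0 x = l x :=
      Subtype.val_injective.extend_apply l 0 x
    refine ⟨Function.extend Subtype.val l 0, ?_, fun x hx => ?_⟩
    · rw [continuousOn_iff_continuous_domRestrict]
      exact (continuousOn_univ.1 hl).congr fun x => (hext x).symm
    · rw [hext ⟨x, hx⟩]
      exact hexp ⟨x, hx⟩ (mem_univ _)

theorem HasLogOn.of_homotopy {H : I × X → ℂ} (hH : ContinuousOn H (univ ×ˢ S))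
    (hne : ∀ t, ∀ x ∈ S, H (t, x) ≠ 0) (h₀ : HasLogOn (fun x => H (0, x)) S) :
    HasLogOn (fun x => H (1, x)) S := by
  obtain ⟨l, hl, hexp⟩ := h₀
  let K : C(I × S, {z : ℂ // z ≠ 0}) :=
    ⟨fun p => ⟨H (p.1, p.2), hne p.1 p.2 p.2.2⟩, Continuous.subtype_mk
      (hH.comp_continuous (by fun_prop) fun p : I × S => ⟨mem_univ p.1, p.2.2⟩) _⟩
  have hK (x : S) : K (0, x) = ⟨_, (S.domRestrict l x).exp_ne_zero⟩ :=
    Subtype.ext (hexp x x.2).symm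
  let L := Complex.isCoveringMap_exp.liftHomotopy K ⟨_, hl.domRestrict⟩ hK
  have hL (x : S) : Complex.exp (L (1, x)) = H (1, x) :=
    congrArg Subtype.val (congrFun (Complex.isCoveringMap_exp.liftHomotopy_lifts K _ hK) (1, x))
  exact hasLogOn_iff_domRestrict.2
    ⟨fun x => L (1, x), (by fun_prop : Continuous _).continuousOn, fun x _ => hL x⟩

theorem hasLogOn_univ_of_contractibleSpace [ContractibleSpace X] (hq : Continuous q)
    (hne : ∀ x, q x ≠ 0) : HasLogOn q univ := by
  obtain ⟨x₀, ⟨F⟩⟩ := id_nullhomotopic X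
  have hq₁ : HasLogOn (fun x => q (F (σ 1, x))) univ :=
    HasLogOn.of_homotopy (H := fun p => q (F (σ p.1, p.2))) (by fun_prop) (fun _ _ _ => hne _)
      (by simpa using hasLogOn_const (hne x₀) univ)
  simpa using hq₁

theorem hasLogOn_of_contractibleSpace [ContractibleSpace S] (hq : ContinuousOn q S)
    (hne : ∀ x ∈ S, q x ≠ 0) : HasLogOn q S :=
  hasLogOn_iff_domRestrict.2 <|
    hasLogOn_univ_of_contractibleSpace hq.domRestrict fun x => hne x x.2

theorem hasLogOn_range_of_isEmbedding {Y : Type*} [TopologicalSpace Y] [ContractibleSpace Y]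
    {γ : Y → X} (hγ : IsEmbedding γ) (hq : ContinuousOn q (range γ))
    (hne : ∀ x ∈ range γ, q x ≠ 0) : HasLogOn q (range γ) :=
  have := hγ.toHomeomorph.symm.contractibleSpace
  hasLogOn_of_contractibleSpace hq hne

theorem eq_of_exp_eq_const {l : X → ℂ} {c : ℂ} (hS : IsPreconnected S) (hl : ContinuousOn l S)
    (hexp : ∀ x ∈ S, Complex.exp (l x) = c) {x y : X} (hx : x ∈ S) (hy : y ∈ S) : l x = l y :=
  Complex.isCoveringMap_exp.isSeparatedMap.constOn_of_comp
    Complex.isCoveringMap_exp.isLocalHomeomorph.isLocallyInjective hS hl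
    (fun x hx y hy => Subtype.ext ((hexp x hx).trans (hexp y hy).symm)) hx hy

theorem exists_eqOn_add_const_of_exp_eq {l l' : X → ℂ} (hS : IsPreconnected S)
    (hl : ContinuousOn l S) (hl' : ContinuousOn l' S)
    (hexp : ∀ x ∈ S, Complex.exp (l x) = Complex.exp (l' x)) :
    ∃ c : ℂ, Complex.exp c = 1 ∧ EqOn l (fun x => l' x + c) S := by
  have hsub (x) (hx : x ∈ S) : Complex.exp (l x - l' x) = 1 := by
    rw [Complex.exp_sub, hexp x hx, div_self (Complex.exp_ne_zero _)]
  rcases S.eq_empty_or_nonempty with rfl | ⟨y, hy⟩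
  · exact ⟨0, Complex.exp_zero, eqOn_empty _ _⟩
  · refine ⟨l y - l' y, hsub y hy, fun x hx => ?_⟩
    exact eq_add_of_sub_eq' (eq_of_exp_eq_const hS (hl.sub hl') hsub hx hy)

theorem HasLogOn.exists_common (hA : HasLogOn q A) (hB : HasLogOn q B)
    (hAB : IsPreconnected (A ∩ B)) :
    ∃ l : X → ℂ, ContinuousOn l A ∧ ContinuousOn l B ∧ ∀ x ∈ A ∪ B, Complex.exp (l x) = q x := by
  classical
  obtain ⟨lA, hlA, hA⟩ := hA
  obtain ⟨lB, hlB, hB⟩ := hB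
  obtain ⟨c, hc, hAc⟩ := exists_eqOn_add_const_of_exp_eq hAB (hlA.mono inter_subset_left)
    (hlB.mono inter_subset_right) fun x hx => (hA x hx.1).trans (hB x hx.2).symm
  let l : X → ℂ := A.piecewise lA fun x => lB x + c
  have hlA_eq : EqOn l lA A := piecewise_eqOn _ _ _
  have hlB_eq : EqOn l (fun x => lB x + c) B := fun x hx => by
    by_cases hxA : x ∈ A
    · exact (hlA_eq hxA).trans (hAc ⟨hxA, hx⟩)
    · exact piecewise_eq_of_notMem _ _ _ hxA
  refine ⟨l, hlA.congr hlA_eq, (hlB.add continuousOn_const).congr hlB_eq, ?_⟩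
  rintro x (hx | hx)
  · rw [hlA_eq hx, hA x hx]
  · rw [hlB_eq hx, Complex.exp_add, hc, mul_one, hB x hx]

theorem HasLogOn.union_of_isClosed (hA : HasLogOn q A) (hB : HasLogOn q B)
    (hAB : IsPreconnected (A ∩ B)) (hAc : IsClosed A) (hBc : IsClosed B) : HasLogOn q (A ∪ B) :=
  let ⟨l, hlA, hlB, hexp⟩ := hA.exists_common hB hAB
  ⟨l, hlA.union_of_isClosed hlB hAc hBc, hexp⟩

theorem HasLogOn.union_of_isOpen (hA : HasLogOn q A) (hB : HasLogOn q B)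
    (hAB : IsPreconnected (A ∩ B)) (hAo : IsOpen A) (hBo : IsOpen B) : HasLogOn q (A ∪ B) :=
  let ⟨l, hlA, hlB, hexp⟩ := hA.exists_common hB hAB
  ⟨l, hlA.union_of_isOpen hlB hAo hBo, hexp⟩

theorem HasLogOn.of_subset_range_union [T2Space X] {a b : X} {γ : Path a b}
    (hγ : Function.Injective γ) (hqγ : HasLogOn q (range γ)) (hqB : HasLogOn q B)
    (hB : IsClosed B) (hγB : range γ ∩ B ⊆ {a, b}) {F : Set X} (hF : IsClosed F)
    (hFsub : F ⊆ range γ ∪ B) {t : I} (ht : γ t ∉ F) : HasLogOn q F := by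
  -- Cut the arc at `t`: since `γ t ∉ F`, gluing `B` to the part of `F` before `t`, and then to the
  -- part after `t`, each time happens over at most one point.
  have hclosed {T : Set I} (hT : IsClosed T) : IsClosed (γ '' T ∩ F) :=
    (hT.isCompact.image γ.continuous).isClosed.inter hF
  have hlog (T : Set I) : HasLogOn q (γ '' T ∩ F) :=
    hqγ.mono (inter_subset_left.trans (image_subset_range _ _))
  have hendpoint {s : I} (hs : γ s ∈ B) : s = 0 ∨ s = 1 :=
    (hγB ⟨mem_range_self s, hs⟩).imp (fun h => hγ (h.trans γ.source.symm))
      fun h => hγ (h.trans γ.target.symm)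
  have hne {s : I} (hs : γ s ∈ F) : s ≠ t := fun h => ht (h ▸ hs)
  have hbefore : (γ '' Iic t ∩ F) ∩ B ⊆ {γ 0} := by
    rintro _ ⟨⟨⟨s, hst, rfl⟩, hsF⟩, hsB⟩
    rcases hendpoint hsB with rfl | rfl
    · rfl
    · exact (hne hsF (le_antisymm hst le_one')).elim
  have hafter : ((γ '' Iic t ∩ F) ∪ B) ∩ (γ '' Ici t ∩ F) ⊆ {γ 1} := by
    rintro _ ⟨⟨⟨r, hrt, hrs⟩, -⟩ | hsB, ⟨s, hst, rfl⟩, hsF⟩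
    · exact (hne hsF (le_antisymm (hγ hrs ▸ hrt) hst)).elim
    · rcases hendpoint hsB with rfl | rfl
      · exact (hne hsF (le_antisymm nonneg' hst)).elim
      · rfl
  have hcover : F ⊆ ((γ '' Iic t ∩ F) ∪ B) ∪ (γ '' Ici t ∩ F) := fun x hx => by
    rcases hFsub hx with ⟨s, rfl⟩ | hxB
    · rcases le_total s t with hs | hs
      · exact .inl (.inl ⟨mem_image_of_mem γ hs, hx⟩)
      · exact .inr ⟨mem_image_of_mem γ hs, hx⟩
    · exact .inl (.inr hxB)
  have hqbefore := (hlog (Iic t)).union_of_isClosed hqB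
    (subsingleton_singleton.anti hbefore).isPreconnected (hclosed isClosed_Iic) hB
  exact (hqbefore.union_of_isClosed (hlog (Ici t))
    (subsingleton_singleton.anti hafter).isPreconnected ((hclosed isClosed_Iic).union hB)
    (hclosed isClosed_Ici)).mono hcover

end HasLogOn

section Components

theorem frontier_connectedComponentIn_subset_compl {X : Type*} [TopologicalSpace X]
    [LocallyConnectedSpace X] {U : Set X} (hU : IsOpen U) (x : X) :
    frontier (connectedComponentIn U x) ⊆ Uᶜ := by
  rintro z ⟨hz, hz'⟩ hzU
  obtain ⟨w, hwz, hwx⟩ := mem_closure_iff.1 hz _ hU.connectedComponentIn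
    (mem_connectedComponentIn hzU)
  rw [hU.connectedComponentIn.interior_eq, connectedComponentIn_eq hwx,
    ← connectedComponentIn_eq hwz] at hz'
  exact hz' (mem_connectedComponentIn hzU)

variable {E : Type*} [NormedAddCommGroup E] [NormedSpace ℝ E]

theorem isPreconnected_compl_closedBall (hE : 1 < Module.rank ℝ E) (x : E) {r : ℝ}
    (hr : 0 ≤ r) : IsPreconnected (Metric.closedBall x r)ᶜ := by
  have hpolar : (Metric.closedBall x r)ᶜ =
      (fun p : ℝ × E => x + p.1 • p.2) '' Ioi r ×ˢ Metric.sphere (0 : E) 1 := by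
    ext z
    constructor
    · intro hz
      have hrz : r < ‖z - x‖ := by simpa [dist_eq_norm] using hz
      have hz₀ : ‖z - x‖ ≠ 0 := (hr.trans_lt hrz).ne'
      exact ⟨(‖z - x‖, ‖z - x‖⁻¹ • (z - x)), ⟨hrz, by simp [norm_smul, hz₀]⟩,
        by simp [smul_inv_smul₀ hz₀]⟩
    · rintro ⟨⟨s, u⟩, ⟨hs, hu⟩, rfl⟩
      have hrs : r < s := hs
      have hu₁ : ‖u‖ = 1 := by simpa using hu
      simpa [norm_smul, hu₁] using hrs.trans_le (le_abs_self s)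
  rw [hpolar]
  exact (isPreconnected_Ioi.prod (isPreconnected_sphere hE 0 1)).image _ (by fun_prop)

theorem exists_isBounded_connectedComponentIn_compl (hE : 1 < Module.rank ℝ E) {K : Set E}
    (hK : Bornology.IsBounded K) (hKc : ¬ IsPreconnected Kᶜ) :
    ∃ x ∈ Kᶜ, Bornology.IsBounded (connectedComponentIn Kᶜ x) := by
  by_contra! hunbdd
  obtain ⟨R, hR, hKR⟩ := hK.subset_closedBall_lt 0 0
  have hfar (x) (hx : x ∈ Kᶜ) :
      ∃ z ∉ Metric.closedBall (0 : E) R, z ∈ connectedComponentIn Kᶜ x := by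
    obtain ⟨z, hzx, hz⟩ := not_subset.1 fun h => hunbdd x hx (Metric.isBounded_closedBall.subset h)
    exact ⟨z, hz, hzx⟩
  refine hKc (isPreconnected_of_forall_pair fun x hx y hy => ?_)
  obtain ⟨z, hz, hzx⟩ := hfar x hx
  obtain ⟨w, hw, hwy⟩ := hfar y hy
  have hwz : w ∈ connectedComponentIn Kᶜ z :=
    (isPreconnected_compl_closedBall hE 0 hR.le).subset_connectedComponentIn hz
      (compl_subset_compl.2 hKR) hw
  have hyx : y ∈ connectedComponentIn Kᶜ x := by
    rw [connectedComponentIn_eq hzx, connectedComponentIn_eq hwz, ← connectedComponentIn_eq hwy]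
    exact mem_connectedComponentIn hy
  exact ⟨_, connectedComponentIn_subset _ _, mem_connectedComponentIn hx, hyx,
    isPreconnected_connectedComponentIn⟩

end Components

section Plane

variable {a b p : ℂ} {r : ℝ}

theorem not_hasLogOn_sphere_sub (hr : 0 ≤ r) :
    ¬ HasLogOn (fun z => z - p) (Metric.sphere p r) := by
  rintro ⟨l, hl, hexp⟩
  have hmem (θ : ℝ) : circleMap p r θ ∈ Metric.sphere p r := circleMap_mem_sphere p hr θ
  let d : ℝ → ℂ := fun θ => l (circleMap p r θ) - θ * Complex.I
  have hd : Continuous d :=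
    (hl.comp_continuous (continuous_circleMap p r) hmem).sub (by fun_prop)
  have hdexp (θ : ℝ) : Complex.exp (d θ) = r := by
    rw [Complex.exp_sub, hexp _ (hmem θ)]
    simp [circleMap]
  have hconst : d (2 * Real.pi) = d 0 :=
    eq_of_exp_eq_const isPreconnected_univ hd.continuousOn (fun θ _ => hdexp θ) (mem_univ _)
      (mem_univ _)
  have hperiod : circleMap p r (2 * Real.pi) = circleMap p r 0 := by simp [circleMap]
  simp [d, hperiod, Real.pi_ne_zero] at hconst

theorem not_hasLogOn_sphere_sub_div_sub (hr : 0 ≤ r) (hb : b ∉ Metric.closedBall a r) :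
    ¬ HasLogOn (fun z => (z - a) / (z - b)) (Metric.sphere a r) := by
  intro h
  have hne (z) (hz : z ∈ Metric.closedBall a r) : z - b ≠ 0 :=
    sub_ne_zero.2 (ne_of_mem_of_not_mem hz hb)
  have := Metric.contractibleSpace_closedBall (x := a) hr
  have hsub : HasLogOn (fun z => z - b) (Metric.closedBall a r) :=
    hasLogOn_of_contractibleSpace (by fun_prop) hne
  refine not_hasLogOn_sphere_sub hr ((h.mul (hsub.mono Metric.sphere_subset_closedBall)).congr ?_)
  exact fun z hz => (div_mul_cancel₀ _ (hne z (Metric.sphere_subset_closedBall hz))).symm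

theorem not_hasLogOn_compl_pair_sub_div_sub (hab : a ≠ b) :
    ¬ HasLogOn (fun z => (z - a) / (z - b)) {a, b}ᶜ := by
  intro h
  have hd : 0 < dist b a := dist_pos.2 hab.symm
  refine not_hasLogOn_sphere_sub_div_sub (half_pos hd).le ?_ (h.mono ?_)
  · simpa using half_lt_self hd
  · rintro z hz (rfl | rfl) <;> rw [Metric.mem_sphere] at hz
    · exact (half_pos hd).ne (by simpa using hz)
    · exact (half_lt_self hd).ne' hz

theorem hasLogOn_compl_range_sub_div_sub (γ : Path a b) :
    HasLogOn (fun z => (z - a) / (z - b)) (range γ)ᶜ := by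
  have hne (t) (z) (hz : z ∈ (range γ)ᶜ) : z - γ t ≠ 0 :=
    fun h => hz ⟨t, (sub_eq_zero.1 h).symm⟩
  have hneb (z) (hz : z ∈ (range γ)ᶜ) : z - b ≠ 0 := by simpa using hne 1 z hz
  have hslide : HasLogOn (fun z => (z - γ (σ 1)) / (z - b)) (range γ)ᶜ :=
    HasLogOn.of_homotopy (H := fun x => (x.2 - γ (σ x.1)) / (x.2 - b))
      (ContinuousOn.div (by fun_prop) (by fun_prop) fun x hx => hneb x.2 hx.2)
      (fun t z hz => div_ne_zero (hne (σ t) z hz) (hneb z hz))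
      ((hasLogOn_const one_ne_zero _).congr fun z hz => by simp [div_self (hneb z hz)])
  simpa using hslide

theorem not_isPreconnected_compl_range_union (hab : a ≠ b) {γ₁ γ₂ : Path a b}
    (hint : range γ₁ ∩ range γ₂ = {a, b}) : ¬ IsPreconnected (range γ₁ ∪ range γ₂)ᶜ := by
  intro h
  have hopen (γ : Path a b) : IsOpen (range γ)ᶜ :=
    (isCompact_range γ.continuous).isClosed.isOpen_compl
  rw [compl_union] at h
  have hlog := (hasLogOn_compl_range_sub_div_sub γ₁).union_of_isOpen
    (hasLogOn_compl_range_sub_div_sub γ₂) h (hopen γ₁) (hopen γ₂)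
  rw [← compl_inter, hint] at hlog
  exact not_hasLogOn_compl_pair_sub_div_sub hab hlog

theorem exists_continuous_ne_zero_eqOn_compl {Ω : Set ℂ} (hp : p ∈ Ω)
    (h : HasLogOn (fun z => z - p) (frontier Ω)) :
    ∃ q : ℂ → ℂ, Continuous q ∧ (∀ z, q z ≠ 0) ∧ EqOn q (fun z => z - p) Ωᶜ := by
  classical
  obtain ⟨l, hl, hexp⟩ := h
  obtain ⟨L, hL⟩ := ContinuousMap.exists_restrict_eq (isClosed_frontier (s := Ω))
    ⟨(frontier Ω).domRestrict l, hl.domRestrict⟩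
  have hLl (z) (hz : z ∈ frontier Ω) : L z = l z := DFunLike.congr_fun hL ⟨z, hz⟩
  refine ⟨Ω.piecewise (fun z => Complex.exp (L z)) fun z => z - p, ?_, fun z => ?_,
    piecewise_eqOn_compl _ _ _⟩
  · exact Continuous.piecewise (fun z hz => by rw [hLl z hz, hexp z hz]) (by fun_prop)
      (by fun_prop)
  · by_cases hz : z ∈ Ω
    · simp [hz]
    · simpa [hz] using sub_ne_zero.2 (ne_of_mem_of_not_mem hp hz).symm

theorem notMem_of_hasLogOn_frontier {Ω : Set ℂ} (hΩ : Bornology.IsBounded Ω)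
    (h : HasLogOn (fun z => z - p) (frontier Ω)) : p ∉ Ω := by
  intro hp
  obtain ⟨q, hq, hne, hqΩ⟩ := exists_continuous_ne_zero_eqOn_compl hp h
  obtain ⟨R, hR⟩ := hΩ.subset_ball p
  have hR₀ : 0 < R := Metric.pos_of_mem_ball (hR hp)
  have hsphere : Metric.sphere p R ⊆ Ωᶜ := fun z hz hzΩ => (Metric.mem_ball.1 (hR hzΩ)).ne hz
  exact not_hasLogOn_sphere_sub hR₀.le <|
    ((hasLogOn_univ_of_contractibleSpace hq hne).mono (subset_univ _)).congr
      (hqΩ.mono hsphere).symm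

theorem frontier_connectedComponentIn_compl_eq {J : Set ℂ} (hJ : IsClosed J) (hp : p ∉ J)
    (hb : Bornology.IsBounded (connectedComponentIn Jᶜ p))
    (hlog : ∀ F ⊂ J, IsClosed F → HasLogOn (fun z => z - p) F) :
    frontier (connectedComponentIn Jᶜ p) = J := by
  have hsub : frontier (connectedComponentIn Jᶜ p) ⊆ J := by
    simpa using frontier_connectedComponentIn_subset_compl hJ.isOpen_compl p
  by_contra hne
  exact notMem_of_hasLogOn_frontier hb (hlog _ (hsub.ssubset_of_ne hne) isClosed_frontier)
    (mem_connectedComponentIn hp)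

theorem hasLogOn_range_sub {γ : Path a b} (hγ : Function.Injective γ) (hp : p ∉ range γ) :
    HasLogOn (fun z => z - p) (range γ) :=
  have : ContractibleSpace I := (convex_Icc 0 1).contractibleSpace ⟨0, unitInterval.zero_mem⟩
  hasLogOn_range_of_isEmbedding (γ.continuous.isClosedEmbedding hγ).isEmbedding (by fun_prop)
    fun _ hz => sub_ne_zero.2 (ne_of_mem_of_not_mem hz hp)

theorem hasLogOn_sub_of_ssubset_range_union {γ₁ γ₂ : Path a b} (hγ₁ : Function.Injective γ₁)
    (hγ₂ : Function.Injective γ₂) (hint : range γ₁ ∩ range γ₂ ⊆ {a, b})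
    (hp : p ∉ range γ₁ ∪ range γ₂) {F : Set ℂ} (hF : IsClosed F)
    (hFJ : F ⊂ range γ₁ ∪ range γ₂) : HasLogOn (fun z => z - p) F := by
  have hlog₁ := hasLogOn_range_sub hγ₁ fun h => hp (.inl h)
  have hlog₂ := hasLogOn_range_sub hγ₂ fun h => hp (.inr h)
  obtain ⟨_, ⟨t, rfl⟩ | ⟨t, rfl⟩, ht⟩ := exists_of_ssubset hFJ
  · exact .of_subset_range_union hγ₁ hlog₁ hlog₂ (isCompact_range γ₂.continuous).isClosed hint hF
      hFJ.subset ht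
  · exact .of_subset_range_union hγ₂ hlog₂ hlog₁ (isCompact_range γ₁.continuous).isClosed
      (inter_comm _ _ ▸ hint) hF (union_comm _ _ ▸ hFJ.subset) ht

theorem exists_isConnected_frontier_eq_range_union {γ₁ γ₂ : Path a b}
    (hγ₁ : Function.Injective γ₁) (hγ₂ : Function.Injective γ₂)
    (hint : range γ₁ ∩ range γ₂ = {a, b}) :
    ∃ Ω : Set ℂ, IsOpen Ω ∧ Bornology.IsBounded Ω ∧ IsConnected Ω ∧
      frontier Ω = range γ₁ ∪ range γ₂ := by
  have hab : a ≠ b := by simpa using hγ₁.ne zero_ne_one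
  have hJ : IsCompact (range γ₁ ∪ range γ₂) :=
    (isCompact_range γ₁.continuous).union (isCompact_range γ₂.continuous)
  have hrank : 1 < Module.rank ℝ ℂ := by simp [Complex.rank_real_complex]
  obtain ⟨p, hp, hb⟩ := exists_isBounded_connectedComponentIn_compl hrank hJ.isBounded
    (not_isPreconnected_compl_range_union hab hint)
  exact ⟨_, hJ.isClosed.isOpen_compl.connectedComponentIn, hb,
    isConnected_connectedComponentIn_iff.2 hp,
    frontier_connectedComponentIn_compl_eq hJ.isClosed hp hb fun F hFJ hF =>
      hasLogOn_sub_of_ssubset_range_union hγ₁ hγ₂ hint.subset hp hF hFJ⟩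

end Plane

section OfLine

variable {X : Type*} [TopologicalSpace X] {x y : X} {f : ℝ → X} (hf : ContinuousOn f (Icc 0 1))
  (h₀ : f 0 = x) (h₁ : f 1 = y)

theorem range_ofLine : range (Path.ofLine hf h₀ h₁) = f '' Icc 0 1 :=
  (range_comp f Subtype.val).trans (congrArg _ Subtype.range_coe)

theorem injective_ofLine (hfi : InjOn f (Icc 0 1)) : Function.Injective (Path.ofLine hf h₀ h₁) :=
  hfi.injective

end OfLine

theorem stmt3 (a b : E2) (hab : a ≠ b) (f g : ℝ → E2)
    (hf : ContinuousOn f (Set.Icc 0 1)) (hg : ContinuousOn g (Set.Icc 0 1))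
    (hfi : Set.InjOn f (Set.Icc 0 1)) (hgi : Set.InjOn g (Set.Icc 0 1))
    (hf0 : f 0 = a) (hf1 : f 1 = b) (hg0 : g 0 = a) (hg1 : g 1 = b)
    (hint : f '' Set.Icc 0 1 ∩ g '' Set.Icc 0 1 = {a, b}) :
    ∃ Ω : Set E2, IsOpen Ω ∧ Bornology.IsBounded Ω ∧ IsConnected Ω ∧
      frontier Ω = f '' Set.Icc 0 1 ∪ g '' Set.Icc 0 1 := by
  let e : E2 ≃ₗᵢ[ℝ] ℂ := Complex.orthonormalBasisOneI.repr.symm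
  let γ₁ := (Path.ofLine hf hf0 hf1).map e.continuous
  let γ₂ := (Path.ofLine hg hg0 hg1).map e.continuous
  have hγ₁ : range γ₁ = e '' (f '' Icc 0 1) := by
    rw [← range_ofLine hf hf0 hf1, ← range_comp, Path.map_coe]
  have hγ₂ : range γ₂ = e '' (g '' Icc 0 1) := by
    rw [← range_ofLine hg hg0 hg1, ← range_comp, Path.map_coe]
  obtain ⟨Ω, hopen, hbdd, hconn, hfr⟩ := exists_isConnected_frontier_eq_range_union
    (γ₁ := γ₁) (γ₂ := γ₂) (e.injective.comp (injective_ofLine hf hf0 hf1 hfi))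
    (e.injective.comp (injective_ofLine hg hg0 hg1 hgi))
    (by rw [hγ₁, hγ₂, ← image_inter e.injective, hint, image_pair])
  refine ⟨e ⁻¹' Ω, hopen.preimage e.continuous, e.antilipschitz.isBounded_preimage hbdd,
    e.toHomeomorph.isConnected_preimage.2 hconn, ?_⟩
  calc frontier (e ⁻¹' Ω) = e ⁻¹' frontier Ω := (e.toHomeomorph.preimage_frontier Ω).symm
    _ = f '' Icc 0 1 ∪ g '' Icc 0 1 := by
      rw [hfr, hγ₁, hγ₂, ← image_union, preimage_image_eq _ e.injective]
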